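/- Fix n ≥ 1 and an even m ≥ 2, and let π be a mechanism on profiles D = (D_1,…,D_n) of size-m multisets of reals that is anonymous and strategyproof w.r.t. manipulation (for every agent i, every such profile D, and every size-m multiset D_i′, l(π(D),D_i) ≤ l(π(D_i′,D_{−i}),D_i)). Then for every agent i, every fixed tuple D_{−i} of the other agents' size-m reports, and all reals y0 ≤ y1, one of the following holds: either π(D_i,D_{−i}) ∈ [y0,y1] for every size-m multiset D_i with med(D_i) = [y0,y1]; or there exist s, h ∈ ℝ with (s < y0 ≤ y1 < h or s = h) such that for every size-m multiset D_i with med(D_i) = [y0,y1]: π(D_i,D_{−i}) = s if l(s,D_i) < l(h,D_i), π(D_i,D_{−i}) = h if l(s,D_i) > l(h,D_i), and π(D_i,D_{−i}) ∈ {s,h} if l(s,D_i) = l(h,D_i). -/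

import Mathlib

/-- The loss of a finite multiset `S` of reals at a point `x`:
`l(x,S) = \sum_{y \in S} |x - y|` (with multiplicity). -/
noncomputable def loss (x : ℝ) (S : Multiset ℝ) : ℝ :=
  (S.map fun y => |x - y|).sum

/-- Left endpoint `t_{⌈k/2⌉}` of the median interval of a (nonempty) multiset of reals. -/
noncomputable def medLo (S : Multiset ℝ) : ℝ :=
  (S.sort (· ≤ ·)).getD ((S.card - 1) / 2) 0

/-- Right endpoint `t_{⌊k/2⌋+1}` of the median interval of a (nonempty) multiset of reals. -/
noncomputable def medHi (S : Multiset ℝ) : ℝ :=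
  (S.sort (· ≤ ·)).getD (S.card / 2) 0

/-- Anonymity, on profiles of size-`m` multisets. -/
def AnonymousM (n m : ℕ) (π : (Fin n → Multiset ℝ) → ℝ) : Prop :=
  ∀ D : Fin n → Multiset ℝ, (∀ j, (D j).card = m) →
    ∀ σ : Equiv.Perm (Fin n), π (D ∘ σ) = π D

/-- Strategyproofness w.r.t. manipulation: an agent may replace her size-`m` report by
any other size-`m` multiset. -/
def StrategyproofM (n m : ℕ) (π : (Fin n → Multiset ℝ) → ℝ) : Prop :=
  ∀ (i : Fin n) (D : Fin n → Multiset ℝ), (∀ j, (D j).card = m) →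
    ∀ Di' : Multiset ℝ, Di'.card = m →
      loss (π D) (D i) ≤ loss (π (Function.update D i Di')) (D i)

/-- Efficiency, on profiles of size-`m` multisets. -/
def EfficientM (n m : ℕ) (π : (Fin n → Multiset ℝ) → ℝ) : Prop :=
  ∀ D : Fin n → Multiset ℝ, (∀ j, (D j).card = m) →
    ¬ ∃ x : ℝ, (∀ j, loss x (D j) ≤ loss (π D) (D j)) ∧
        ∃ j, loss x (D j) < loss (π D) (D j)

open Classical in
lemma loss_right (x x' : ℝ) (h : x ≤ x') (S : Multiset ℝ) :
    loss x' S ≤ loss x S + (x' - x) * ((S.card : ℝ) - 2 * (S.countP (fun t => x' ≤ t) : ℕ)) := by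
  induction S using Multiset.induction_on with
  | empty => simp [loss]
  | cons a S ih =>
    simp only [loss, Multiset.map_cons, Multiset.sum_cons, Multiset.card_cons,
      Multiset.countP_cons] at ih ⊢
    push_cast
    split_ifs with ha
    · have h1 : |x' - a| = a - x' := by rw [abs_of_nonpos (by linarith)]; ring
      have h2 : |x - a| = a - x := by rw [abs_of_nonpos (by linarith)]; ring
      rw [h1, h2]; push_cast; linarith
    · have h1 : |x' - a| ≤ |x' - x| + |x - a| := abs_sub_le _ _ _
      rw [abs_of_nonneg (by linarith : 0 ≤ x' - x)] at h1
      push_cast; linarith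

open Classical in
lemma loss_left (x x' : ℝ) (h : x ≤ x') (S : Multiset ℝ) :
    loss x S ≤ loss x' S + (x' - x) * ((S.card : ℝ) - 2 * (S.countP (fun t => t ≤ x) : ℕ)) := by
  induction S using Multiset.induction_on with
  | empty => simp [loss]
  | cons a S ih =>
    simp only [loss, Multiset.map_cons, Multiset.sum_cons, Multiset.card_cons,
      Multiset.countP_cons] at ih ⊢
    push_cast
    split_ifs with ha
    · have h1 : |x' - a| = x' - a := abs_of_nonneg (by linarith)
      have h2 : |x - a| = x - a := abs_of_nonneg (by linarith)
      rw [h1, h2]; push_cast; linarith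
    · have h1 : |x - a| ≤ |x - x'| + |x' - a| := abs_sub_le _ _ _
      rw [abs_of_nonpos (by linarith : x - x' ≤ 0)] at h1
      push_cast; linarith

open Classical in
lemma count_ge (S : Multiset ℝ) (j : ℕ) (hj : j < S.card) (x : ℝ)
    (hx : x ≤ (S.sort (· ≤ ·)).getD j 0) :
    S.card ≤ j + S.countP (fun t => x ≤ t) := by
  have hs : (S.sort (· ≤ ·)).Pairwise (· ≤ ·) := Multiset.pairwise_sort S (· ≤ ·)
  have hl : (S.sort (· ≤ ·)).length = S.card := Multiset.length_sort (· ≤ ·)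
  have he : ((S.sort (· ≤ ·) : List ℝ) : Multiset ℝ) = S := Multiset.sort_eq S (· ≤ ·)
  generalize S.sort (· ≤ ·) = L at *
  subst he
  have hd : (L.drop j).countP (fun t => decide (x ≤ t)) = (L.drop j).length := by
    rw [List.countP_eq_length]
    intro a ha
    obtain ⟨k, hk, rfl⟩ := List.mem_iff_getElem.1 ha
    rw [List.getElem_drop]
    rw [List.getD_eq_getElem _ _ (by omega)] at hx
    have := (List.pairwise_iff_getElem.1 hs)
    simp only [List.length_drop] at hk
    rcases Nat.eq_zero_or_pos k with h0 | h0
    · subst h0; simpa using hx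
    · simpa using hx.trans (this j (j + k) (by omega) (by omega) (by omega))
  have h2 : (L.drop j).countP (fun t => decide (x ≤ t)) ≤ L.countP (fun t => decide (x ≤ t)) :=
    (List.drop_sublist j L).countP_le
  rw [Multiset.coe_countP]
  simp only [List.length_drop] at hd
  omega

open Classical in
lemma count_le (S : Multiset ℝ) (j : ℕ) (hj : j < S.card) (x : ℝ)
    (hx : (S.sort (· ≤ ·)).getD j 0 ≤ x) :
    j + 1 ≤ S.countP (fun t => t ≤ x) := by
  have hs : (S.sort (· ≤ ·)).Pairwise (· ≤ ·) := Multiset.pairwise_sort S (· ≤ ·)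
  have hl : (S.sort (· ≤ ·)).length = S.card := Multiset.length_sort (· ≤ ·)
  have he : ((S.sort (· ≤ ·) : List ℝ) : Multiset ℝ) = S := Multiset.sort_eq S (· ≤ ·)
  generalize S.sort (· ≤ ·) = L at *
  subst he
  have hd : (L.take (j+1)).countP (fun t => decide (t ≤ x)) = (L.take (j+1)).length := by
    rw [List.countP_eq_length]
    intro a ha
    obtain ⟨k, hk, rfl⟩ := List.mem_iff_getElem.1 ha
    rw [List.getElem_take]
    rw [List.getD_eq_getElem _ _ (by omega)] at hx
    have := (List.pairwise_iff_getElem.1 hs)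
    simp only [List.length_take] at hk
    rcases Nat.lt_or_ge k j with h0 | h0
    · simpa using (this k j (by omega) (by omega) (by omega)).trans hx
    · obtain rfl : k = j := by omega
      simpa using hx
  have h2 : (L.take (j+1)).countP (fun t => decide (t ≤ x)) ≤ L.countP (fun t => decide (t ≤ x)) :=
    (List.take_sublist (j+1) L).countP_le
  rw [Multiset.coe_countP]
  simp only [List.length_take] at hd
  omega

lemma loss_facts (m : ℕ) (hm : Even m) (hm2 : 2 ≤ m) (S : Multiset ℝ) (hS : S.card = m) :
    (∀ x x', x < x' → x' ≤ medLo S → loss x' S < loss x S) ∧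
    (∀ x x', x ≤ x' → x' ≤ medHi S → loss x' S ≤ loss x S) ∧
    (∀ x x', x < x' → medHi S ≤ x → loss x S < loss x' S) ∧
    (∀ x x', x ≤ x' → medLo S ≤ x → loss x S ≤ loss x' S) := by
  classical
  obtain ⟨k, rfl⟩ := hm
  have e1 : (S.card - 1) / 2 = k - 1 := by omega
  have e2 : S.card / 2 = k := by omega
  unfold medLo medHi
  rw [e1, e2]
  refine ⟨fun x x' h hx => ?_, fun x x' h hx => ?_, fun x x' h hx => ?_, fun x x' h hx => ?_⟩
  · have c := count_ge S (k-1) (by omega) x' hx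
    have l := loss_right x x' h.le S
    have c' : (S.card : ℝ) - 2 * (S.countP (fun t => x' ≤ t) : ℕ) < 0 := by
      have : S.card < 2 * S.countP (fun t => x' ≤ t) := by omega
      have : (S.card : ℝ) < 2 * (S.countP (fun t => x' ≤ t) : ℕ) := by exact_mod_cast this
      linarith
    nlinarith [mul_neg_of_pos_of_neg (sub_pos.2 h) c']
  · have c := count_ge S k (by omega) x' hx
    have l := loss_right x x' h S
    have c' : (S.card : ℝ) - 2 * (S.countP (fun t => x' ≤ t) : ℕ) ≤ 0 := by
      have : S.card ≤ 2 * S.countP (fun t => x' ≤ t) := by omega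
      have : (S.card : ℝ) ≤ 2 * (S.countP (fun t => x' ≤ t) : ℕ) := by exact_mod_cast this
      linarith
    nlinarith [mul_nonpos_of_nonneg_of_nonpos (sub_nonneg.2 h) c']
  · have c := count_le S k (by omega) x hx
    have l := loss_left x x' h.le S
    have c' : (S.card : ℝ) - 2 * (S.countP (fun t => t ≤ x) : ℕ) < 0 := by
      have : S.card < 2 * S.countP (fun t => t ≤ x) := by omega
      have : (S.card : ℝ) < 2 * (S.countP (fun t => t ≤ x) : ℕ) := by exact_mod_cast this
      linarith
    nlinarith [mul_neg_of_pos_of_neg (sub_pos.2 h) c']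
  · have c := count_le S (k-1) (by omega) x hx
    have l := loss_left x x' h S
    have c' : (S.card : ℝ) - 2 * (S.countP (fun t => t ≤ x) : ℕ) ≤ 0 := by
      have : S.card ≤ 2 * S.countP (fun t => t ≤ x) := by omega
      have : (S.card : ℝ) ≤ 2 * (S.countP (fun t => t ≤ x) : ℕ) := by exact_mod_cast this
      linarith
    nlinarith [mul_nonpos_of_nonneg_of_nonpos (sub_nonneg.2 h) c']

/-- Lemma 5, even case: for even `m`, an anonymous mechanism that is
strategyproof w.r.t. manipulation has, fixing the other agents' size-`m` reports and
agent `i`'s median interval `[y0,y1]`, either all outputs in `[y0,y1]`, or at most two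
possible outputs `s, h` with `s < y0 ≤ y1 < h` or `s = h`, selected as in Eqn. (8). -/
theorem stmt_15 (n m : ℕ) (hn : 1 ≤ n) (hm : Even m) (hm2 : 2 ≤ m)
    (π : (Fin n → Multiset ℝ) → ℝ)
    (hanon : AnonymousM n m π) (hsp : StrategyproofM n m π)
    (i : Fin n) (D : Fin n → Multiset ℝ) (hD : ∀ j, j ≠ i → (D j).card = m)
    (y0 y1 : ℝ) (hy : y0 ≤ y1) :
    (∀ Di : Multiset ℝ, Di.card = m → medLo Di = y0 → medHi Di = y1 →
        π (Function.update D i Di) ∈ Set.Icc y0 y1) ∨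
    (∃ s h : ℝ, (s < y0 ∧ y1 < h ∨ s = h) ∧
      ∀ Di : Multiset ℝ, Di.card = m → medLo Di = y0 → medHi Di = y1 →
        (loss s Di < loss h Di → π (Function.update D i Di) = s) ∧
        (loss h Di < loss s Di → π (Function.update D i Di) = h) ∧
        (loss s Di = loss h Di →
          π (Function.update D i Di) = s ∨ π (Function.update D i Di) = h)) := by
  have sp : ∀ S T : Multiset ℝ, S.card = m → T.card = m →
      loss (π (Function.update D i S)) S ≤ loss (π (Function.update D i T)) S := by
    intro S T hS hT
    have := hsp i (Function.update D i S) (by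
      intro j
      by_cases hj : j = i
      · subst hj; simpa using hS
      · simpa [hj] using hD j hj) T hT
    simpa using this
  have key := loss_facts m hm hm2
  by_cases hin : ∃ T : Multiset ℝ, T.card = m ∧ medLo T = y0 ∧ medHi T = y1 ∧
      π (Function.update D i T) ∈ Set.Icc y0 y1
  · left
    obtain ⟨T, hT, -, -, hT0, hT1⟩ := hin
    rintro S hS rfl rfl
    obtain ⟨k1, k2, k3, k4⟩ := key S hS
    have h := sp S T hS hT
    constructor
    · by_contra! hlt
      have a := k1 _ _ hlt le_rfl
      have b := k2 _ _ hT0 hT1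
      linarith
    · by_contra! hlt
      have a := k3 _ _ hlt le_rfl
      have b := k4 _ _ hT1 hT0
      linarith
  right
  have hout : ∀ S : Multiset ℝ, S.card = m → medLo S = y0 → medHi S = y1 →
      π (Function.update D i S) < y0 ∨ y1 < π (Function.update D i S) := by
    intro S hS h0 h1
    by_contra! hc
    exact hin ⟨S, hS, h0, h1, hc⟩
  have uniqL : ∀ S T : Multiset ℝ, S.card = m → medLo S = y0 → T.card = m → 
      π (Function.update D i T) < y0 →
      π (Function.update D i T) ≤ π (Function.update D i S) ∨ y0 < π (Function.update D i S) := by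
    rintro S T hS rfl hT h2
    by_contra! hc
    have := (key S hS).1 _ _ hc.1 h2.le
    linarith [sp S T hS hT]
  have uniqR : ∀ S T : Multiset ℝ, S.card = m → medHi S = y1 → T.card = m → 
      y1 < π (Function.update D i T) →
      π (Function.update D i S) ≤ π (Function.update D i T) ∨ π (Function.update D i S) < y1 := by
    rintro S T hS rfl hT h2
    by_contra! hc
    have := (key S hS).2.2.1 _ _ hc.1 h2.le
    linarith [sp S T hS hT]
  have eqL : ∀ S T : Multiset ℝ, S.card = m → medLo S = y0 → T.card = m → medLo T = y0 →
      π (Function.update D i S) < y0 → π (Function.update D i T) < y0 →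
      π (Function.update D i S) = π (Function.update D i T) := by
    intro S T hS h0 hT h0' h1 h2
    rcases uniqL S T hS h0 hT h2 with a | a <;> rcases uniqL T S hT h0' hS h1 with b | b <;>
      linarith
  have eqR : ∀ S T : Multiset ℝ, S.card = m → medHi S = y1 → T.card = m → medHi T = y1 →
      y1 < π (Function.update D i S) → y1 < π (Function.update D i T) →
      π (Function.update D i S) = π (Function.update D i T) := by
    intro S T hS h0 hT h0' h1 h2
    rcases uniqR S T hS h0 hT h2 with a | a <;> rcases uniqR T S hT h0' hS h1 with b | b <;>
      linarith
  by_cases hL : ∃ S : Multiset ℝ, S.card = m ∧ medLo S = y0 ∧ medHi S = y1 ∧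
      π (Function.update D i S) < y0
  · obtain ⟨S, hS, hS0, hS1, hSl⟩ := hL
    by_cases hR : ∃ T : Multiset ℝ, T.card = m ∧ medLo T = y0 ∧ medHi T = y1 ∧
      y1 < π (Function.update D i T)
    · obtain ⟨T, hT, hT0, hT1, hTl⟩ := hR
      refine ⟨_, _, Or.inl ⟨hSl, hTl⟩, fun U hU hU0 hU1 => ?_⟩
      have a1 := sp U S hU hS
      have a2 := sp U T hU hT
      rcases hout U hU hU0 hU1 with h | h
      · have e := eqL U S hU hU0 hS hS0 h hSl
        rw [e] at a1 a2 ⊢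
        exact ⟨fun _ => rfl, fun hh => absurd hh (not_lt.2 a2), fun _ => Or.inl rfl⟩
      · have e := eqR U T hU hU1 hT hT1 h hTl
        rw [e] at a1 a2 ⊢
        exact ⟨fun hh => absurd hh (not_lt.2 a1), fun _ => rfl, fun _ => Or.inr rfl⟩
    · refine ⟨π (Function.update D i S), _, Or.inr rfl, fun U hU hU0 hU1 => ?_⟩
      · rcases hout U hU hU0 hU1 with h | h
        · have e := eqL U S hU hU0 hS hS0 h hSl
          exact ⟨fun _ => e, fun _ => e, fun _ => Or.inl e⟩
        · exact absurd ⟨U, hU, hU0, hU1, h⟩ hR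
  · by_cases hR : ∃ T : Multiset ℝ, T.card = m ∧ medLo T = y0 ∧ medHi T = y1 ∧
      y1 < π (Function.update D i T)
    · obtain ⟨T, hT, hT0, hT1, hTl⟩ := hR
      refine ⟨π (Function.update D i T), _, Or.inr rfl, fun U hU hU0 hU1 => ?_⟩
      rcases hout U hU hU0 hU1 with h | h
      · exact absurd ⟨U, hU, hU0, hU1, h⟩ hL
      · have e := eqR U T hU hU1 hT hT1 h hTl
        exact ⟨fun _ => e, fun _ => e, fun _ => Or.inl e⟩
    · refine ⟨0, 0, Or.inr rfl, fun U hU hU0 hU1 => ?_⟩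
      rcases hout U hU hU0 hU1 with h | h
      · exact absurd ⟨U, hU, hU0, hU1, h⟩ hL
      · exact absurd ⟨U, hU, hU0, hU1, h⟩ hR
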